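/- Let (ε_t)_{t ∈ ℤ} be i.i.d. real random variables with mean zero and common variance σ² ∈ (0, ∞), let ρ ∈ (−1, 1) and μ ∈ ℝ, and define X_n = μ + Σ_{j=0}^∞ ρ^j ε_{n−j} for n ≥ 1. Then the sample mean X̄_n = (1/n) Σ_{i=1}^n X_i converges to μ in probability as n → ∞. -/

import Mathlib

open MeasureTheory ProbabilityTheory Filter

/-! In `L^p` the sample mean of `∑_j a_j ε_{t-τ_j}` is the series `∑_j a_j m_{n,j}`, where `m_{n,j}`
is the sample mean of the innovations shifted by `τ_j`. Each `m_{n,j}` converges to the common mean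
by the law of large numbers in `L^p` and is bounded by the common `L^p` norm of the innovations, so
Tannery's theorem lets the limit pass through the absolutely summable series. -/

section NormedSpace

variable {ι κ B : Type*} [NormedAddCommGroup B] [NormedSpace ℝ B]

lemma summable_norm_smul_of_norm_le {a : ι → ℝ} (ha : Summable a) {y : ι → B} {C : ℝ}
    (hy : ∀ j, ‖y j‖ ≤ C) : Summable fun j => ‖a j • y j‖ := by
  refine (ha.norm.mul_right C).of_nonneg_of_le (fun j => norm_nonneg _) fun j => ?_
  rw [norm_smul]
  gcongr
  exact hy j

lemma norm_card_inv_smul_sum_le {s : Finset κ} {y : κ → B} {C : ℝ} (hC : 0 ≤ C)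
    (hy : ∀ i ∈ s, ‖y i‖ ≤ C) : ‖(s.card : ℝ)⁻¹ • ∑ i ∈ s, y i‖ ≤ C := by
  rw [norm_smul, norm_inv, RCLike.norm_natCast]
  refine inv_mul_le_of_le_mul₀ (Nat.cast_nonneg _) hC ?_
  simpa only [nsmul_eq_mul] using norm_sum_le_of_le s hy |>.trans_eq (Finset.sum_const C)

lemma tendsto_card_inv_smul_sum_tsum_smul [CompleteSpace B] {α : Type*} {l : Filter α}
    {s : α → Finset κ} {a : ι → ℝ} (ha : Summable a) {y : ι → κ → B} {m : ι → B} {C : ℝ}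
    (hy : ∀ j i, ‖y j i‖ ≤ C)
    (hm : ∀ j, Tendsto (fun n => ((s n).card : ℝ)⁻¹ • ∑ i ∈ s n, y j i) l (nhds (m j))) :
    Tendsto (fun n => ((s n).card : ℝ)⁻¹ • ∑ i ∈ s n, ∑' j, a j • y j i) l
      (nhds (∑' j, a j • m j)) := by
  have interchange (n : α) : ((s n).card : ℝ)⁻¹ • ∑ i ∈ s n, ∑' j, a j • y j i =
      ∑' j, a j • ((s n).card : ℝ)⁻¹ • ∑ i ∈ s n, y j i := by
    have hsum (i : κ) : Summable fun j => a j • y j i :=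
      (summable_norm_smul_of_norm_le ha fun j => hy j i).of_norm
    rw [← Summable.tsum_finsetSum fun i _ => hsum i,
      ← (summable_sum fun i _ => hsum i).tsum_const_smul]
    simp only [← Finset.smul_sum, smul_comm (a _)]
  simp only [interchange]
  refine tendsto_tsum_of_dominated_convergence (bound := fun j => ‖a j‖ * |C|)
    (ha.norm.mul_right _) (fun j => (hm j).const_smul (a j)) (.of_forall fun n j => ?_)
  rw [norm_smul]
  gcongr
  exact norm_card_inv_smul_sum_le (abs_nonneg C) fun i _ => (hy j i).trans (le_abs_self C)

end NormedSpace

section Measure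

variable {Ω E : Type*} [MeasurableSpace Ω] {P : Measure Ω} [NormedAddCommGroup E] {p : ENNReal}

lemma coeFn_smul_sum_ae_eq {κ : Type*} [NormedSpace ℝ E] (c : ℝ) (s : Finset κ)
    {f : κ → Lp E p P} {g : κ → Ω → E} (hfg : ∀ i, f i =ᵐ[P] g i) :
    ⇑(c • ∑ i ∈ s, f i) =ᵐ[P] fun ω => c • ∑ i ∈ s, g i ω := by
  have hfg_all : ∀ᵐ ω ∂P, ∀ i ∈ s, f i ω = g i ω :=
    (ae_ball_iff s.countable_toSet).mpr fun i _ => hfg i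
  filter_upwards [Lp.coeFn_smul c (∑ i ∈ s, f i), Lp.coeFn_fun_finsetSum s f, hfg_all]
    with ω hsmul hsum hω
  rw [hsmul, Pi.smul_apply, hsum, Finset.sum_congr rfl hω]

lemma tendstoInMeasure_const_add {α : Type*} {l : Filter α} {f : α → Ω → E} {g : Ω → E} (c : E)
    (h : TendstoInMeasure P f l g) :
    TendstoInMeasure P (fun n ω => c + f n ω) l (fun ω => c + g ω) := by
  simpa only [TendstoInMeasure, edist_add_left] using h

lemma norm_toLp_eq_of_identDistrib [MeasurableSpace E] [OpensMeasurableSpace E]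
    {Ω' : Type*} [MeasurableSpace Ω'] {P' : Measure Ω'} {f : Ω → E} {g : Ω' → E}
    (hf : MemLp f p P) (hg : MemLp g p P') (h : IdentDistrib f g P P') :
    ‖hf.toLp f‖ = ‖hg.toLp g‖ := by
  rw [Lp.norm_toLp, Lp.norm_toLp, h.eLpNorm_eq]

end Measure

section LinearProcess

variable {ι Ω E : Type*} [NormedAddCommGroup E] [NormedSpace ℝ E]

/-- The linear process (moving average) `∑_j a_j ε_{t-τ_j}` with coefficients `a` and innovations
`ε`. Arbitrary lags `τ` cover one-sided and two-sided moving averages at once. At an `ω` where the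
series is not summable the value is `0`. -/
noncomputable def linearProcess (a : ι → ℝ) (τ : ι → ℤ) (ε : ℤ → Ω → E) (t : ℤ) (ω : Ω) : E :=
  ∑' j, a j • ε (t - τ j) ω

variable [MeasurableSpace Ω] {P : Measure Ω} {p : ENNReal} [Fact (1 ≤ p)] [CompleteSpace E]

lemma coeFn_tsum_smul_toLp_ae_eq_linearProcess [Countable ι] {a : ι → ℝ} (ha : Summable a)
    (τ : ι → ℤ) {ε : ℤ → Ω → E} (hε : ∀ t, MemLp (ε t) p P) {C : ℝ}
    (hC : ∀ t, ‖(hε t).toLp (ε t)‖ ≤ C) (t : ℤ) :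
    ⇑(∑' j, a j • (hε (t - τ j)).toLp (ε (t - τ j))) =ᵐ[P] linearProcess a τ ε t := by
  have hsum : ∑' j, ‖a j • (hε (t - τ j)).toLp (ε (t - τ j))‖ₑ ≠ ⊤ :=
    tsum_enorm_ne_top_iff_summable_norm.mpr (summable_norm_smul_of_norm_le ha fun j => hC _)
  have hterm : ∀ᵐ ω ∂P, ∀ j,
      (a j • (hε (t - τ j)).toLp (ε (t - τ j)) : Lp E p P) ω = a j • ε (t - τ j) ω :=
    ae_all_iff.mpr fun j => by
      filter_upwards [Lp.coeFn_smul (a j) ((hε (t - τ j)).toLp _), (hε (t - τ j)).coeFn_toLp]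
        with ω hsmul hcoe
      rw [hsmul, Pi.smul_apply, hcoe]
  filter_upwards [Lp.coeFn_tsum hsum, hterm] with ω htsum hω
  rw [htsum, linearProcess, tsum_congr hω]

variable [MeasurableSpace E] [BorelSpace E]

lemma tendsto_inv_smul_sum_Icc_toLp [IsFiniteMeasure P] (hp : p ≠ ⊤) {ε : ℤ → Ω → E}
    (hε : ∀ t, MemLp (ε t) p P) (hindep : Pairwise fun s t => IndepFun (ε s) (ε t) P)
    (hident : ∀ t, IdentDistrib (ε t) (ε 0) P P) (k : ℤ) :
    Tendsto (fun n : ℕ => (n : ℝ)⁻¹ • ∑ i ∈ Finset.Icc 1 n, (hε (i - k)).toLp (ε (i - k)))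
      atTop (nhds (Lp.const p P (∫ ω, ε 0 ω ∂P))) := by
  let Y : ℕ → Ω → E := fun i => ε ((i + 1 : ℕ) - k)
  have hlaw := strong_law_Lp (Fact.out : 1 ≤ p) hp Y (hε _)
    (fun i j hij => hindep (by simpa using hij)) fun i => (hident _).trans (hident _).symm
  have hY_mean : ∫ ω, Y 0 ω ∂P = ∫ ω, ε 0 ω ∂P := (hident _).integral_eq
  rw [hY_mean] at hlaw
  refine (Lp.tendsto_Lp_iff_tendsto_eLpNorm _ _ (memLp_const _)).mpr
    (hlaw.congr fun n => eLpNorm_congr_ae ?_)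
  filter_upwards [coeFn_smul_sum_ae_eq (n : ℝ)⁻¹ (Finset.Icc 1 n)
    fun i : ℕ => (hε (i - k)).coeFn_toLp] with ω hω
  rw [Pi.sub_apply, hω, Finset.range_eq_Ico,
    Finset.sum_Ico_add' (fun i : ℕ => ε (i - k) ω) 0 n 1, zero_add,
    Finset.Ico_add_one_right_eq_Icc]

lemma tendsto_inv_smul_sum_Icc_tsum_toLp [IsFiniteMeasure P] (hp : p ≠ ⊤)
    {a : ι → ℝ} (ha : Summable a) (τ : ι → ℤ) {ε : ℤ → Ω → E}
    (hε : ∀ t, MemLp (ε t) p P) (hindep : Pairwise fun s t => IndepFun (ε s) (ε t) P)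
    (hident : ∀ t, IdentDistrib (ε t) (ε 0) P P) :
    Tendsto (fun n : ℕ => (n : ℝ)⁻¹ • ∑ i ∈ Finset.Icc 1 n,
        ∑' j, a j • (hε (i - τ j)).toLp (ε (i - τ j)))
      atTop (nhds ((∑' j, a j) • Lp.const p P (∫ ω, ε 0 ω ∂P))) := by
  have h := tendsto_card_inv_smul_sum_tsum_smul (s := fun n : ℕ => Finset.Icc 1 n) ha
    (y := fun j (i : ℕ) => (hε (i - τ j)).toLp (ε (i - τ j)))
    (fun j i => (norm_toLp_eq_of_identDistrib (hε _) (hε 0) (hident _)).le)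
    (fun j => by simpa using tendsto_inv_smul_sum_Icc_toLp hp hε hindep hident (τ j))
  simpa only [Nat.card_Icc, add_tsub_cancel_right, ha.tsum_smul_const] using h

theorem tendstoInMeasure_inv_smul_sum_Icc_linearProcess [Countable ι] [IsFiniteMeasure P]
    {a : ι → ℝ} (ha : Summable a) (τ : ι → ℤ) {ε : ℤ → Ω → E}
    (hε : Integrable (ε 0) P) (hindep : Pairwise fun s t => IndepFun (ε s) (ε t) P)
    (hident : ∀ t, IdentDistrib (ε t) (ε 0) P P) :
    TendstoInMeasure P
      (fun (n : ℕ) ω => (n : ℝ)⁻¹ • ∑ i ∈ Finset.Icc 1 n, linearProcess a τ ε i ω)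
      atTop (fun _ => (∑' j, a j) • ∫ ω, ε 0 ω ∂P) := by
  have hL1 (t : ℤ) : MemLp (ε t) 1 P := (hident t).symm.memLp_snd (memLp_one_iff_integrable.mpr hε)
  have hnorm (t : ℤ) : ‖(hL1 t).toLp (ε t)‖ ≤ ‖(hL1 0).toLp (ε 0)‖ :=
    (norm_toLp_eq_of_identDistrib (hL1 t) (hL1 0) (hident t)).le
  have hlim := tendstoInMeasure_of_tendsto_Lp
    (tendsto_inv_smul_sum_Icc_tsum_toLp ENNReal.one_ne_top ha τ hL1 hindep hident)
  refine hlim.congr (fun n => coeFn_smul_sum_ae_eq _ _ fun i =>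
    coeFn_tsum_smul_toLp_ae_eq_linearProcess ha τ hL1 hnorm i) ?_
  filter_upwards [Lp.coeFn_smul (∑' j, a j) (Lp.const 1 P (∫ ω, ε 0 ω ∂P)),
    Lp.coeFn_const 1 P (∫ ω, ε 0 ω ∂P)] with ω hsmul hconst
  rw [hsmul, Pi.smul_apply, hconst, Function.const_apply]

theorem sample_mean_linear_process_tendsto_in_measure_general [Countable ι] [IsFiniteMeasure P]
    {a : ι → ℝ} (ha : Summable a) (τ : ι → ℤ) {ε : ℤ → Ω → E}
    (hε : Integrable (ε 0) P) (hindep : Pairwise fun s t => IndepFun (ε s) (ε t) P)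
    (hident : ∀ t, IdentDistrib (ε t) (ε 0) P P) (μ : E) :
    TendstoInMeasure P
      (fun (n : ℕ) ω => (n : ℝ)⁻¹ • ∑ i ∈ Finset.Icc 1 n, (μ + linearProcess a τ ε i ω))
      atTop (fun _ => μ + (∑' j, a j) • ∫ ω, ε 0 ω ∂P) := by
  refine (tendstoInMeasure_const_add μ
    (tendstoInMeasure_inv_smul_sum_Icc_linearProcess ha τ hε hindep hident)).congr' ?_ .rfl
  filter_upwards [eventually_ne_atTop 0] with n hn
  have hμ : (n : ℝ)⁻¹ • (n • μ) = μ := by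
    rw [← Nat.cast_smul_eq_nsmul ℝ, inv_smul_smul₀ (Nat.cast_ne_zero.mpr hn)]
  exact .of_forall fun ω => by
    simp only [Finset.sum_add_distrib, Finset.sum_const, Nat.card_Icc, add_tsub_cancel_right,
      smul_add, hμ]

end LinearProcess

/-- For the AR(1)-type linear process `X_n = μ + ∑_{j≥0} ρ^j ε_{n−j}` with
i.i.d. mean-zero innovations of variance `σ² ∈ (0,∞)` and `ρ ∈ (−1,1)`, the sample mean
`X̄_n = (1/n) ∑_{i=1}^n X_i` converges to `μ` in probability. -/
theorem sample_mean_linear_process_tendsto_in_measure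
    {Ω : Type*} [MeasurableSpace Ω] (P : Measure Ω) [IsProbabilityMeasure P]
    (ε : ℤ → Ω → ℝ) (hmeas : ∀ t, Measurable (ε t))
    (hindep : iIndepFun ε P)
    (hident : ∀ s t : ℤ, IdentDistrib (ε s) (ε t) P P)
    (hL2 : ∀ t, MemLp (ε t) 2 P)
    (hmean : ∀ t, ∫ ω, ε t ω ∂P = 0)
    (σ2 : ℝ) (hσ2 : 0 < σ2) (hvar : ∀ t, variance (ε t) P = σ2)
    (ρ : ℝ) (hρ : ρ ∈ Set.Ioo (-1 : ℝ) 1) (μ : ℝ)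
    (X : ℕ → Ω → ℝ)
    (hX : ∀ n ω, X n ω = μ + ∑' j : ℕ, ρ ^ j * ε ((n : ℤ) - j) ω) :
    TendstoInMeasure P (fun (n : ℕ) ω => (1 / (n : ℝ)) * ∑ i ∈ Finset.Icc (1:ℕ) n, X i ω)
      atTop (fun _ => μ) := by
  have hρ_abs : |ρ| < 1 := abs_lt.mpr hρ
  simpa [hX, hmean, linearProcess] using sample_mean_linear_process_tendsto_in_measure_general
    (summable_geometric_of_abs_lt_one hρ_abs) (fun j : ℕ => (j : ℤ))
    ((hL2 0).integrable one_le_two) (fun _ _ hst => hindep.indepFun hst) (hident · 0) μ
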